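/- arXiv:2601.07427 — 6 statements merged into one kernel-verified Lean document; each statement's English description precedes it below -/
import Mathlib

section
/- Let n be a positive integer and A an n×n Hermitian complex matrix. Then the minimum of Tr(X) over all positive semidefinite complex matrices X satisfying X + A positive semidefinite is attained and equals the absolute value of the sum of the negative eigenvalues of A (counted with multiplicity). -/
open Matrix Finset
open scoped ComplexOrder

/-!
In an eigenbasis of `A`, the diagonal entries of a feasible `X` satisfy `Xᵢᵢ ≥ 0` and
`Xᵢᵢ + λᵢ ≥ 0`, that is, `Xᵢᵢ ≥ λᵢ⁻`. Summing over `i` bounds `Tr X` from below by the sum of the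
negative parts `λᵢ⁻`, and the negative part `A⁻` of `A` given by the functional calculus attains
this bound.
-/

theorem abs_sum_filter_neg_eq_sum_negPart {ι G : Type*} [AddCommGroup G] [LinearOrder G]
    [IsOrderedAddMonoid G] (s : Finset ι) (f : ι → G) :
    |∑ i ∈ s with f i < 0, f i| = ∑ i ∈ s, (f i)⁻ := by
  have sum_nonpos : ∑ i ∈ s with f i < 0, f i ≤ 0 :=
    Finset.sum_nonpos fun i hi => (mem_filter.mp hi).2.le
  rw [abs_of_nonpos sum_nonpos, ← sum_neg_distrib, sum_filter]
  refine sum_congr rfl fun i _ => ?_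
  split_ifs with hi
  · exact (negPart_of_nonpos hi.le).symm
  · exact (negPart_of_nonneg (not_lt.mp hi)).symm

theorem trace_conjStarAlgAut {ι R : Type*} [Fintype ι] [DecidableEq ι] [CommRing R] [StarRing R]
    (U : unitaryGroup ι R) (X : Matrix ι ι R) :
    (Unitary.conjStarAlgAut R _ U X).trace = X.trace := by
  rw [Unitary.conjStarAlgAut_apply, trace_mul_cycle, Unitary.coe_star_mul_self, one_mul]

section RCLike

variable {ι 𝕜 : Type*} [RCLike 𝕜] {A X : Matrix ι ι 𝕜}

theorem negPart_re_diag_le_re_diag (hX : X.PosSemidef) (hXA : (X + A).PosSemidef) (i : ι) :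
    (RCLike.re (A i i))⁻ ≤ RCLike.re (X i i) := by
  have diag_X_nonneg : 0 ≤ RCLike.re (X i i) := (RCLike.nonneg_iff.mp hX.diag_nonneg).1
  have diag_add_nonneg : 0 ≤ RCLike.re (X i i) + RCLike.re (A i i) := by
    simpa only [Matrix.add_apply, map_add] using (RCLike.nonneg_iff.mp (hXA.diag_nonneg (i := i))).1
  exact sup_le (neg_le_iff_add_nonneg.mpr diag_add_nonneg) diag_X_nonneg

variable [Fintype ι]

theorem sum_negPart_re_diag_le_re_trace (hX : X.PosSemidef) (hXA : (X + A).PosSemidef) :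
    ∑ i, (RCLike.re (A i i))⁻ ≤ RCLike.re X.trace := by
  rw [trace, map_sum]
  exact sum_le_sum fun i _ => negPart_re_diag_le_re_diag hX hXA i

variable [DecidableEq ι]

theorem posSemidef_conjStarAlgAut (U : unitaryGroup ι 𝕜) (hX : X.PosSemidef) :
    (Unitary.conjStarAlgAut 𝕜 _ U X).PosSemidef :=
  hX.mul_mul_conjTranspose_same (U : Matrix ι ι 𝕜)

theorem sum_negPart_eigenvalues_le_re_trace (hA : A.IsHermitian) (hX : X.PosSemidef)
    (hXA : (X + A).PosSemidef) :
    ∑ i, (hA.eigenvalues i)⁻ ≤ RCLike.re X.trace := by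
  let toEigenbasis := Unitary.conjStarAlgAut 𝕜 (Matrix ι ι 𝕜) (star hA.eigenvectorUnitary)
  have toEigenbasis_A : toEigenbasis A = diagonal (RCLike.ofReal ∘ hA.eigenvalues) :=
    hA.conjStarAlgAut_star_eigenvectorUnitary
  have toEigenbasis_add_posSemidef : (toEigenbasis X + toEigenbasis A).PosSemidef :=
    map_add toEigenbasis X A ▸ posSemidef_conjStarAlgAut _ hXA
  calc ∑ i, (hA.eigenvalues i)⁻
      = ∑ i, (RCLike.re (toEigenbasis A i i))⁻ := by
        simp only [toEigenbasis_A, diagonal_apply_eq, Function.comp_apply, RCLike.ofReal_re]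
    _ ≤ RCLike.re (toEigenbasis X).trace :=
        sum_negPart_re_diag_le_re_trace (posSemidef_conjStarAlgAut _ hX) toEigenbasis_add_posSemidef
    _ = RCLike.re X.trace := by rw [trace_conjStarAlgAut]

theorem trace_cfc_eq_sum_eigenvalues (hA : A.IsHermitian) (f : ℝ → ℝ) :
    (cfc f A).trace = ∑ i, (f (hA.eigenvalues i) : 𝕜) := by
  rw [hA.cfc_eq, IsHermitian.cfc, trace_conjStarAlgAut, trace_diagonal]
  rfl

theorem re_trace_negPart_eq_sum_negPart_eigenvalues (hA : A.IsHermitian) :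
    RCLike.re (A⁻).trace = ∑ i, (hA.eigenvalues i)⁻ := by
  rw [CFC.negPart_def, cfcₙ_eq_cfc, trace_cfc_eq_sum_eigenvalues hA, map_sum]
  simp only [RCLike.ofReal_re]

open scoped MatrixOrder in
theorem posSemidef_negPart (A : Matrix ι ι 𝕜) : (A⁻).PosSemidef :=
  nonneg_iff_posSemidef.mp (CFC.negPart_nonneg A)

open scoped MatrixOrder in
theorem posSemidef_negPart_add_self (hA : A.IsHermitian) : (A⁻ + A).PosSemidef := by
  have neg_negPart_le : -A⁻ ≤ A := CFC.neg_negPart_le hA.isSelfAdjoint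
  exact nonneg_iff_posSemidef.mp (neg_le_iff_add_nonneg'.mp neg_negPart_le)

theorem stmt_0_general (hA : A.IsHermitian) :
    IsLeast {t : ℝ | ∃ X : Matrix ι ι 𝕜,
        X.PosSemidef ∧ (X + A).PosSemidef ∧ t = RCLike.re X.trace}
      |∑ i with hA.eigenvalues i < 0, hA.eigenvalues i| := by
  rw [abs_sum_filter_neg_eq_sum_negPart]
  constructor
  · exact ⟨A⁻, posSemidef_negPart A, posSemidef_negPart_add_self hA,
      (re_trace_negPart_eq_sum_negPart_eigenvalues hA).symm⟩
  · rintro _ ⟨X, hX, hXA, rfl⟩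
    exact sum_negPart_eigenvalues_le_re_trace hA hX hXA

end RCLike

/-- For a positive integer `n` and an `n × n` Hermitian complex matrix `A`,
the minimum of `Tr X` over positive semidefinite `X` with `X + A` positive semidefinite is
attained and equals the absolute value of the sum of the negative eigenvalues of `A`
(counted with multiplicity). -/
theorem stmt_0 (n : ℕ) (hn : 0 < n) (A : Matrix (Fin n) (Fin n) ℂ)
    (hA : A.IsHermitian) :
    IsLeast {t : ℝ | ∃ X : Matrix (Fin n) (Fin n) ℂ,
        X.PosSemidef ∧ (X + A).PosSemidef ∧ t = X.trace.re}
      |∑ i ∈ Finset.univ.filter (fun i => hA.eigenvalues i < 0), hA.eigenvalues i| :=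
  stmt_0_general hA
end

section
/- The GME negativity is convex: for states ρ_1, …, ρ_m on the multipartite system and nonnegative reals p_1, …, p_m with Σ_i p_i = 1, one has N(Σ_i p_i ρ_i) ≤ Σ_i p_i N(ρ_i). -/
open Matrix Finset
open scoped ComplexOrder
open Classical

/-- The absolute value of the sum of the negative eigenvalues of a matrix
(zero if the matrix is not Hermitian). -/
noncomputable def negSum {n : Type*} [Fintype n] [DecidableEq n]
    (M : Matrix n n ℂ) : ℝ :=
  if h : M.IsHermitian then
    |∑ i ∈ Finset.univ.filter (fun i => h.eigenvalues i < 0), h.eigenvalues i|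
  else 0

/-- Partial transpose of the tensor factors belonging to the parties in `S`. -/
def ptS {V : Type*} [DecidableEq V] (d : V → ℕ) (S : Finset V)
    (M : Matrix ((v : V) → Fin (d v)) ((v : V) → Fin (d v)) ℂ) :
    Matrix ((v : V) → Fin (d v)) ((v : V) → Fin (d v)) ℂ :=
  Matrix.of fun x y =>
    M (fun v => if v ∈ S then y v else x v) (fun v => if v ∈ S then x v else y v)

/-- A quantum state: positive semidefinite with unit trace. -/
def IsState {n : Type*} [Fintype n] (ρ : Matrix n n ℂ) : Prop :=
  ρ.PosSemidef ∧ ρ.trace = 1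

/-- The GME negativity: infimum over all finite decompositions `ρ = Σ p_S ρ_S`, with each term
labelled by a nonempty proper subset `S ⊂ V`, `p_S ≥ 0`, and each `ρ_S` a state, of
`Σ p_S N_S(ρ_S)`, where `N_S` is the bipartite negativity across `S | Sᶜ`. -/
noncomputable def GMEneg {V : Type*} [Fintype V] [DecidableEq V] (d : V → ℕ)
    (ρ : Matrix ((v : V) → Fin (d v)) ((v : V) → Fin (d v)) ℂ) : ℝ :=
  sInf {r : ℝ | ∃ (m : ℕ) (S : Fin m → Finset V) (p : Fin m → ℝ)
      (σ : Fin m → Matrix ((v : V) → Fin (d v)) ((v : V) → Fin (d v)) ℂ),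
      (∀ k, (S k).Nonempty) ∧ (∀ k, S k ≠ Finset.univ) ∧ (∀ k, 0 ≤ p k) ∧
      (∀ k, IsState (σ k)) ∧ ρ = ∑ k, (p k : ℂ) • σ k ∧
      r = ∑ k, p k * negSum (ptS d (S k) (σ k))}

/-!
The weights `p_S` of a decomposition are only required to be nonnegative, so decompositions make
sense for every positive semidefinite `ρ`, and concatenating decompositions of the `ρ i`, rescaled
by `c i`, gives one of `∑ i, c i • ρ i` whose cost is the same combination of the costs. Passing to
the infimum in each summand separately gives sublinearity on the positive semidefinite cone.
-/

theorem le_apply_csInf_of_forall_le {ι α β : Type*} [ConditionallyCompleteLinearOrder α]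
    [TopologicalSpace α] [OrderTopology α] [Preorder β] [TopologicalSpace β] [ClosedIciTopology β]
    {f : (ι → α) → β} (hf : Continuous f) {A : ι → Set α} (hne : ∀ i, (A i).Nonempty)
    (hbdd : ∀ i, BddBelow (A i)) {b : β} (hb : ∀ a, (∀ i, a i ∈ A i) → b ≤ f a) :
    b ≤ f fun i => sInf (A i) := by
  have hclosed : IsClosed (f ⁻¹' Set.Ici b) := isClosed_Ici.preimage hf
  have hsub : Set.univ.pi A ⊆ f ⁻¹' Set.Ici b := fun a ha => hb a fun i => ha i (Set.mem_univ i)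
  refine closure_minimal hsub hclosed ?_
  rw [closure_pi_set]
  exact fun i _ => csInf_mem_closure (hne i) (hbdd i)

theorem exists_eq_smul_isState {n : Type*} [Fintype n] {ρ : Matrix n n ℂ} (hρ : ρ.PosSemidef)
    (hne : ρ ≠ 0) : ∃ t : ℝ, 0 ≤ t ∧ ∃ σ, IsState σ ∧ ρ = (t : ℂ) • σ := by
  have htrace : ρ.trace ≠ 0 := mt hρ.trace_eq_zero_iff.mp hne
  obtain ⟨t, ht, htρ⟩ := RCLike.nonneg_iff_exists_ofReal.mp hρ.trace_nonneg
  refine ⟨t, ht, ρ.trace⁻¹ • ρ, ⟨hρ.smul (inv_nonneg.mpr hρ.trace_nonneg), ?_⟩, ?_⟩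
  · rw [trace_smul, smul_eq_mul, inv_mul_cancel₀ htrace]
  · exact htρ ▸ (smul_inv_smul₀ htrace ρ).symm

theorem negSum_nonneg {n : Type*} [Fintype n] [DecidableEq n] (M : Matrix n n ℂ) :
    0 ≤ negSum M := by
  unfold negSum
  split_ifs
  · exact abs_nonneg _
  · exact le_rfl

section GMEneg

variable {V : Type*} [Fintype V] [DecidableEq V] {d : V → ℕ}
  {ρ : Matrix ((v : V) → Fin (d v)) ((v : V) → Fin (d v)) ℂ}

/-- The values `∑ p_S N_S(ρ_S)` attained by the decompositions `ρ = ∑ p_S ρ_S` over which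
`GMEneg d ρ` is the infimum. The weights are not normalized, so `ρ` need not have unit trace. -/
def decompositionCosts (d : V → ℕ)
    (ρ : Matrix ((v : V) → Fin (d v)) ((v : V) → Fin (d v)) ℂ) : Set ℝ :=
  {r : ℝ | ∃ (m : ℕ) (S : Fin m → Finset V) (p : Fin m → ℝ)
      (σ : Fin m → Matrix ((v : V) → Fin (d v)) ((v : V) → Fin (d v)) ℂ),
      (∀ k, (S k).Nonempty) ∧ (∀ k, S k ≠ Finset.univ) ∧ (∀ k, 0 ≤ p k) ∧
      (∀ k, IsState (σ k)) ∧ ρ = ∑ k, (p k : ℂ) • σ k ∧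
      r = ∑ k, p k * negSum (ptS d (S k) (σ k))}

theorem GMEneg_eq_sInf : GMEneg d ρ = sInf (decompositionCosts d ρ) := rfl

theorem sum_mul_negSum_mem_decompositionCosts {ι : Type*} [Fintype ι] {S : ι → Finset V}
    {p : ι → ℝ} {σ : ι → Matrix ((v : V) → Fin (d v)) ((v : V) → Fin (d v)) ℂ}
    (hSne : ∀ k, (S k).Nonempty) (hSuniv : ∀ k, S k ≠ Finset.univ) (hp : ∀ k, 0 ≤ p k)
    (hσ : ∀ k, IsState (σ k)) :
    ∑ k, p k * negSum (ptS d (S k) (σ k)) ∈ decompositionCosts d (∑ k, (p k : ℂ) • σ k) := by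
  let e := (Fintype.equivFin ι).symm
  exact ⟨Fintype.card ι, S ∘ e, p ∘ e, σ ∘ e, fun k => hSne (e k), fun k => hSuniv (e k),
    fun k => hp (e k), fun k => hσ (e k), (e.sum_comp fun k => (p k : ℂ) • σ k).symm,
    (e.sum_comp fun k => p k * negSum (ptS d (S k) (σ k))).symm⟩

theorem bddBelow_decompositionCosts : BddBelow (decompositionCosts d ρ) := by
  refine ⟨0, ?_⟩
  rintro _ ⟨m, S, p, σ, -, -, hp, -, -, rfl⟩
  exact Finset.sum_nonneg fun k _ => mul_nonneg (hp k) (negSum_nonneg _)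

theorem zero_mem_decompositionCosts_zero :
    0 ∈ decompositionCosts d (0 : Matrix ((v : V) → Fin (d v)) ((v : V) → Fin (d v)) ℂ) :=
  ⟨0, Fin.elim0, Fin.elim0, Fin.elim0, by simp⟩

theorem decompositionCosts_nonempty [Nontrivial V] (hρ : ρ.PosSemidef) :
    (decompositionCosts d ρ).Nonempty := by
  obtain rfl | hne := eq_or_ne ρ 0
  · exact ⟨0, zero_mem_decompositionCosts_zero⟩
  obtain ⟨t, ht, σ, hσ, rfl⟩ := exists_eq_smul_isState hρ hne
  obtain ⟨v⟩ : Nonempty V := inferInstance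
  have hmem := sum_mul_negSum_mem_decompositionCosts (ι := Unit) (S := fun _ => {v})
    (p := fun _ => t) (fun _ => singleton_nonempty v) (fun _ => singleton_ne_univ v)
    (fun _ => ht) (fun _ => hσ)
  rw [Fintype.sum_unique fun _ : Unit => (t : ℂ) • σ] at hmem
  exact ⟨_, hmem⟩

theorem sum_mul_mem_decompositionCosts {ι : Type*} [Fintype ι]
    {ρ : ι → Matrix ((v : V) → Fin (d v)) ((v : V) → Fin (d v)) ℂ} {c r : ι → ℝ}
    (hc : ∀ i, 0 ≤ c i) (hr : ∀ i, r i ∈ decompositionCosts d (ρ i)) :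
    ∑ i, c i * r i ∈ decompositionCosts d (∑ i, (c i : ℂ) • ρ i) := by
  choose m S p σ hSne hSuniv hp hσ hρ hcost using hr
  have hmem := sum_mul_negSum_mem_decompositionCosts (ι := Σ i, Fin (m i))
    (S := fun k => S k.1 k.2) (p := fun k => c k.1 * p k.1 k.2) (σ := fun k => σ k.1 k.2)
    (fun k => hSne k.1 k.2) (fun k => hSuniv k.1 k.2)
    (fun k => mul_nonneg (hc k.1) (hp k.1 k.2)) (fun k => hσ k.1 k.2)
  simpa only [Fintype.sum_sigma, Complex.ofReal_mul, mul_smul, mul_assoc, ← smul_sum, ← mul_sum,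
    ← hρ, ← hcost] using hmem

/-- With at most one party there are no cuts, so the infimum is over `{0}` or over `∅`, where `sInf`
is `0` by convention. -/
theorem GMEneg_eq_zero_of_subsingleton [Subsingleton V] : GMEneg d ρ = 0 := by
  have hzero : ∀ r ∈ decompositionCosts d ρ, r = 0 := by
    rintro _ ⟨m, S, p, σ, hSne, hSuniv, -, -, -, rfl⟩
    exact Finset.sum_eq_zero fun k _ => absurd (hSne k).eq_univ (hSuniv k)
  rw [GMEneg_eq_sInf]
  exact le_antisymm (Real.sInf_nonpos fun r hr => (hzero r hr).le)
    (Real.sInf_nonneg fun r hr => (hzero r hr).ge)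

end GMEneg

theorem stmt_2_general {V : Type*} [Fintype V] [DecidableEq V] (d : V → ℕ) {ι : Type*} [Fintype ι]
    (ρ : ι → Matrix ((v : V) → Fin (d v)) ((v : V) → Fin (d v)) ℂ)
    (hρ : ∀ i, (ρ i).PosSemidef) (c : ι → ℝ) (hc : ∀ i, 0 ≤ c i) :
    GMEneg d (∑ i, (c i : ℂ) • ρ i) ≤ ∑ i, c i * GMEneg d (ρ i) := by
  cases subsingleton_or_nontrivial V
  · simp [GMEneg_eq_zero_of_subsingleton]
  · exact le_apply_csInf_of_forall_le (f := fun r : ι → ℝ => ∑ i, c i * r i) (by fun_prop)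
      (fun i => decompositionCosts_nonempty (hρ i)) (fun _ => bddBelow_decompositionCosts)
      fun _ hr => csInf_le bddBelow_decompositionCosts (sum_mul_mem_decompositionCosts hc hr)

/-- The GME negativity is convex. -/
theorem stmt_2 {V : Type*} [Fintype V] [DecidableEq V] (d : V → ℕ)
    (m : ℕ) (ρ : Fin m → Matrix ((v : V) → Fin (d v)) ((v : V) → Fin (d v)) ℂ)
    (hρ : ∀ i, IsState (ρ i)) (p : Fin m → ℝ) (hp : ∀ i, 0 ≤ p i)
    (hpsum : ∑ i, p i = 1) :
    GMEneg d (∑ i, (p i : ℂ) • ρ i) ≤ ∑ i, p i * GMEneg d (ρ i) :=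
  stmt_2_general d ρ (fun i => (hρ i).1) p hp
end

section
/- Weak duality for GME negativity: let W be a Hermitian matrix on the multipartite system such that for every nonempty proper subset S ⊂ V there exists a matrix Q_S with 0 ⪯ Q_S ⪯ I and Q_S^{Γ_S} ⪯ W. Then for every state ρ one has −Tr(Wρ) ≤ N(ρ). -/
open Matrix Finset
open scoped ComplexOrder
open Classical

/-!
For a Hermitian matrix `M` and `0 ⪯ Q ⪯ I`, the spectral decomposition `M = M⁺ - M⁻` gives
`-Tr(QM) ≤ Tr(QM⁻) ≤ Tr(M⁻)`, and `Tr(M⁻)` is the absolute sum of the negative eigenvalues.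
The partial transpose is self-adjoint for the pairing `(A, B) ↦ Tr(AB)`, because it reindexes the
pairs of indices by an involution. Hence for every cut `S` and every state `σ`
`-Tr(Wσ) ≤ -Tr(Q_S^{Γ_S} σ) = -Tr(Q_S σ^{Γ_S}) ≤ N_S(σ)`,
and this bound, linear in `σ`, passes to the infimum over mixtures.
-/

section TraceOrder

open scoped MatrixOrder

variable {n 𝕜 : Type*} [Fintype n] [RCLike 𝕜] {A B C M Q : Matrix n n 𝕜}

theorem trace_mul_nonneg (hA : 0 ≤ A) (hB : 0 ≤ B) : 0 ≤ (A * B).trace := by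
  obtain ⟨C, rfl⟩ := CStarAlgebra.nonneg_iff_eq_star_mul_self.mp hB
  rw [← Matrix.mul_assoc, Matrix.trace_mul_cycle]
  exact (hA.posSemidef.mul_mul_conjTranspose_same C).trace_nonneg

theorem trace_mul_le_trace_mul_of_le_left (hAB : A ≤ B) (hC : 0 ≤ C) :
    (A * C).trace ≤ (B * C).trace := by
  rw [← sub_nonneg, ← Matrix.trace_sub, ← Matrix.sub_mul]
  exact trace_mul_nonneg (sub_nonneg.mpr hAB) hC

theorem trace_mul_le_trace_mul_of_le_right (hA : 0 ≤ A) (hBC : B ≤ C) :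
    (A * B).trace ≤ (A * C).trace := by
  rw [Matrix.trace_mul_comm A B, Matrix.trace_mul_comm A C]
  exact trace_mul_le_trace_mul_of_le_left hBC hA

theorem neg_trace_mul_le_trace_negPart [DecidableEq n] (hM : M.IsHermitian) (hQ₀ : 0 ≤ Q)
    (hQ₁ : Q ≤ 1) : -(Q * M).trace ≤ M⁻.trace :=
  calc -(Q * M).trace = (Q * -M).trace := by rw [Matrix.mul_neg, Matrix.trace_neg]
    _ ≤ (Q * M⁻).trace :=
      trace_mul_le_trace_mul_of_le_right hQ₀ (neg_le.mp (CFC.neg_negPart_le hM))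
    _ ≤ (1 * M⁻).trace := trace_mul_le_trace_mul_of_le_left hQ₁ (CFC.negPart_nonneg M)
    _ = M⁻.trace := by rw [Matrix.one_mul]

theorem trace_cfc_eq_sum_eigenvalues_s3 [DecidableEq n] (hM : M.IsHermitian) (f : ℝ → ℝ) :
    (cfc f M).trace = ∑ i, (f (hM.eigenvalues i) : 𝕜) := by
  rw [hM.cfc_eq, Matrix.IsHermitian.cfc, Unitary.conjStarAlgAut_apply, Matrix.trace_mul_cycle,
    Unitary.coe_star_mul_self, Matrix.one_mul, Matrix.trace_diagonal]
  rfl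

end TraceOrder

section NegSum

variable {n : Type*} [Fintype n] [DecidableEq n] {M : Matrix n n ℂ}

theorem negSum_eq_sum_negPart_eigenvalues (hM : M.IsHermitian) :
    negSum M = ∑ i, (hM.eigenvalues i)⁻ := by
  have sum_nonpos : ∑ i with hM.eigenvalues i < 0, hM.eigenvalues i ≤ 0 :=
    Finset.sum_nonpos fun i hi => (Finset.mem_filter.mp hi).2.le
  rw [negSum, dif_pos hM, abs_of_nonpos sum_nonpos, ← Finset.sum_neg_distrib, Finset.sum_filter]
  refine Finset.sum_congr rfl fun i _ => ?_
  split_ifs with hi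
  · exact (negPart_eq_neg.mpr hi.le).symm
  · exact (negPart_eq_zero.mpr (not_lt.mp hi)).symm

theorem trace_negPart_eq_negSum (hM : M.IsHermitian) : M⁻.trace = (negSum M : ℂ) := by
  rw [CFC.negPart_def, cfcₙ_eq_cfc, trace_cfc_eq_sum_eigenvalues_s3 hM,
    negSum_eq_sum_negPart_eigenvalues hM]
  push_cast
  rfl

end NegSum

section PartialTranspose

/-- The permutation of pairs of multi-indices `(x, y)` exchanging the coordinates `x v` and `y v`
for `v ∈ S`. The partial transpose of the factors in `S` reindexes matrix entries along it. -/
def swapOn {V : Type*} [DecidableEq V] {α : V → Type*} (S : Finset V) :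
    Equiv.Perm (((v : V) → α v) × ((v : V) → α v)) :=
  Function.Involutive.toPerm (fun z => (S.piecewise z.2 z.1, S.piecewise z.1 z.2)) fun z => by
    simp only [Finset.piecewise_idem_left, Finset.piecewise_idem_right, Finset.piecewise_same]

theorem swapOn_swapOn {V : Type*} [DecidableEq V] {α : V → Type*} (S : Finset V)
    (z : ((v : V) → α v) × ((v : V) → α v)) : swapOn S (swapOn S z) = z :=
  (swapOn S).left_inv z

variable {V : Type*} [DecidableEq V] {d : V → ℕ}
  {M Q W σ : Matrix ((v : V) → Fin (d v)) ((v : V) → Fin (d v)) ℂ}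

theorem ptS_apply_swapOn (S : Finset V)
    (M : Matrix ((v : V) → Fin (d v)) ((v : V) → Fin (d v)) ℂ)
    (z : ((v : V) → Fin (d v)) × ((v : V) → Fin (d v))) :
    ptS d S M (swapOn S z).1 (swapOn S z).2 = M z.1 z.2 :=
  congrArg (fun w : _ × _ => M w.1 w.2) (swapOn_swapOn S z)

theorem isHermitian_ptS (hM : M.IsHermitian) (S : Finset V) : (ptS d S M).IsHermitian :=
  Matrix.IsHermitian.ext fun _ _ => hM.apply _ _

variable [Fintype V]

theorem trace_ptS_mul (S : Finset V)
    (A B : Matrix ((v : V) → Fin (d v)) ((v : V) → Fin (d v)) ℂ) :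
    (ptS d S A * B).trace = (A * ptS d S B).trace := by
  simp only [Matrix.trace, Matrix.diag_apply, Matrix.mul_apply, ← Fintype.sum_prod_type']
  exact Fintype.sum_equiv (swapOn S) _ _ fun z =>
    congrArg (A _ _ * ·) (ptS_apply_swapOn S B z.swap).symm

open scoped MatrixOrder in
theorem neg_trace_mul_le_negSum_ptS {S : Finset V} (hQ₀ : 0 ≤ Q) (hQ₁ : Q ≤ 1)
    (hQW : ptS d S Q ≤ W) (hσ : 0 ≤ σ) : -(W * σ).trace ≤ (negSum (ptS d S σ) : ℂ) := by
  have hσ_pt : (ptS d S σ).IsHermitian := isHermitian_ptS hσ.posSemidef.isHermitian S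
  calc -(W * σ).trace ≤ -(ptS d S Q * σ).trace :=
        neg_le_neg (trace_mul_le_trace_mul_of_le_left hQW hσ)
    _ = -(Q * ptS d S σ).trace := by rw [trace_ptS_mul]
    _ ≤ (ptS d S σ)⁻.trace := neg_trace_mul_le_trace_negPart hσ_pt hQ₀ hQ₁
    _ = (negSum (ptS d S σ) : ℂ) := trace_negPart_eq_negSum hσ_pt

end PartialTranspose

theorem le_GMEneg_of_forall_le_negSum {V : Type*} [Fintype V] [DecidableEq V] [Nontrivial V]
    {d : V → ℕ} {ρ : Matrix ((v : V) → Fin (d v)) ((v : V) → Fin (d v)) ℂ} (hρ : IsState ρ)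
    (f : Matrix ((v : V) → Fin (d v)) ((v : V) → Fin (d v)) ℂ →ₗ[ℝ] ℝ)
    (hf : ∀ S : Finset V, S.Nonempty → S ≠ Finset.univ → ∀ σ, IsState σ →
      f σ ≤ negSum (ptS d S σ)) :
    f ρ ≤ GMEneg d ρ := by
  refine le_csInf ?_ ?_
  · obtain ⟨v⟩ : Nonempty V := inferInstance
    exact ⟨_, 1, fun _ => {v}, fun _ => 1, fun _ => ρ, fun _ => Finset.singleton_nonempty v,
      fun _ => Finset.singleton_ne_univ v, fun _ => zero_le_one, fun _ => hρ, by simp, rfl⟩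
  · rintro _ ⟨m, S, p, σ, hS, hS', hp, hσ, rfl, rfl⟩
    calc f (∑ k, (p k : ℂ) • σ k) = ∑ k, p k * f (σ k) := by
          simp only [map_sum, Complex.coe_smul, map_smul, smul_eq_mul]
      _ ≤ ∑ k, p k * negSum (ptS d (S k) (σ k)) :=
        Finset.sum_le_sum fun k _ =>
          mul_le_mul_of_nonneg_left (hf (S k) (hS k) (hS' k) (σ k) (hσ k)) (hp k)

/-- Weak duality for the GME negativity: if `W` is Hermitian and for every
nonempty proper subset `S ⊂ V` there is `Q_S` with `0 ⪯ Q_S ⪯ I` and `Q_S^{Γ_S} ⪯ W`, then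
`-Tr(Wρ) ≤ N(ρ)` for every state `ρ`. -/
theorem stmt_3 {V : Type*} [Fintype V] [DecidableEq V] (hV : 2 ≤ Fintype.card V) (d : V → ℕ)
    (W : Matrix ((v : V) → Fin (d v)) ((v : V) → Fin (d v)) ℂ) (hW : W.IsHermitian)
    (hcert : ∀ S : Finset V, S.Nonempty → S ≠ Finset.univ →
      ∃ Q : Matrix ((v : V) → Fin (d v)) ((v : V) → Fin (d v)) ℂ,
        Q.PosSemidef ∧ (1 - Q).PosSemidef ∧ (W - ptS d S Q).PosSemidef)
    (ρ : Matrix ((v : V) → Fin (d v)) ((v : V) → Fin (d v)) ℂ) (hρ : IsState ρ) :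
    -((W * ρ).trace.re) ≤ GMEneg d ρ := by
  have : Nontrivial V := Fintype.one_lt_card_iff_nontrivial.mp hV
  refine le_GMEneg_of_forall_le_negSum hρ
    (-(Complex.reLm ∘ₗ Matrix.traceLinearMap _ ℝ ℂ ∘ₗ LinearMap.mulLeft ℝ W))
    fun S hS hS_ne σ hσ => ?_
  obtain ⟨Q, hQ₀, hQ₁, hQW⟩ := hcert S hS hS_ne
  exact (Complex.le_def.mp (neg_trace_mul_le_negSum_ptS hQ₀.nonneg hQ₁ hQW hσ.1.nonneg)).1
end

section
/- Twirling of a witness certificate: let W = Σ_{T⊆E} w_T P_T with real coefficients w_T, let K ⊆ E, and let Q be a positive semidefinite matrix on the total space with Q^{Γ_K} ⪯ W. Define Q̃ = (⊗_{e∉K} T_e ⊗ ⊗_{e∈K} T'_e)(Q), where T_e and T'_e denote the twirling maps T and T' acting on the two ℂ^d factors of edge e. Then Q̃ is positive semidefinite, Q̃^{Γ_K} ⪯ W, and Q̃^{Γ_K} = Σ_{T⊆E} q_T P_T for some real coefficients q_T; moreover, if Q ⪯ I then Q̃ ⪯ I. -/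
open Matrix Finset
open scoped ComplexOrder

/-- The projector onto the maximally entangled state on `ℂ^d ⊗ ℂ^d`. -/
noncomputable def phiM (d : ℕ) : Matrix (Fin d × Fin d) (Fin d × Fin d) ℂ :=
  Matrix.of fun p q => if p.1 = p.2 ∧ q.1 = q.2 then (1 : ℂ) / d else 0

/-- The swap operator on `ℂ^d ⊗ ℂ^d`. -/
def swapM (d : ℕ) : Matrix (Fin d × Fin d) (Fin d × Fin d) ℂ :=
  Matrix.of fun p q => if p.1 = q.2 ∧ p.2 = q.1 then (1 : ℂ) else 0

/-- The symmetric projector `P⁺ = (I + V)/2`. -/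
noncomputable def Pplus (d : ℕ) : Matrix (Fin d × Fin d) (Fin d × Fin d) ℂ :=
  (2⁻¹ : ℂ) • (1 + swapM d)

/-- The antisymmetric projector `P⁻ = (I − V)/2`. -/
noncomputable def Pminus (d : ℕ) : Matrix (Fin d × Fin d) (Fin d × Fin d) ℂ :=
  (2⁻¹ : ℂ) • (1 - swapM d)

/-- `P_T = ⊗_{e∈T} Φ_e ⊗ ⊗_{e∉T} (I_e − Φ_e)` on the total space of the network. -/
noncomputable def PT (d : ℕ) (E : Type*) [Fintype E] [DecidableEq E] (T : Finset E) :
    Matrix (E → Fin d × Fin d) (E → Fin d × Fin d) ℂ :=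
  Matrix.of fun x y =>
    ∏ e, if e ∈ T then phiM d (x e) (y e) else (1 - phiM d) (x e) (y e)

/-- `Γ_K`: partial transpose of the first `ℂ^d` factor of every edge in `K`. -/
def ptK (d : ℕ) (E : Type*) [DecidableEq E] (K : Finset E)
    (M : Matrix (E → Fin d × Fin d) (E → Fin d × Fin d) ℂ) :
    Matrix (E → Fin d × Fin d) (E → Fin d × Fin d) ℂ :=
  Matrix.of fun x y =>
    M (fun e => if e ∈ K then ((y e).1, (x e).2) else x e)
      (fun e => if e ∈ K then ((x e).1, (y e).2) else y e)

/-- Matrix-element kernel of the twirling map `T`. -/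
noncomputable def kerT (d : ℕ) (p q a b : Fin d × Fin d) : ℂ :=
  phiM d p q * phiM d a b + (1 - phiM d) p q * (1 - phiM d) a b / ((d : ℂ) ^ 2 - 1)

/-- Matrix-element kernel of the twirling map `T'`. -/
noncomputable def kerT' (d : ℕ) (p q a b : Fin d × Fin d) : ℂ :=
  2 * Pplus d p q * Pplus d a b / ((d : ℂ) * ((d : ℂ) + 1))
    + 2 * Pminus d p q * Pminus d a b / ((d : ℂ) * ((d : ℂ) - 1))

/-- `⊗_{e∉K} T_e ⊗ ⊗_{e∈K} T'_e` applied to a matrix on the total space. -/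
noncomputable def multiTwirl (d : ℕ) (E : Type*) [Fintype E] [DecidableEq E] (K : Finset E)
    (M : Matrix (E → Fin d × Fin d) (E → Fin d × Fin d) ℂ) :
    Matrix (E → Fin d × Fin d) (E → Fin d × Fin d) ℂ :=
  Matrix.of fun x y =>
    ∑ a : E → Fin d × Fin d, ∑ b : E → Fin d × Fin d,
      (∏ e, if e ∈ K then kerT' d (x e) (y e) (a e) (b e)
            else kerT d (x e) (y e) (a e) (b e)) * M b a

/-!
A twirl is the trace-preserving conditional expectation onto the span of a complete orthogonal
family of projections, so it is positive, unital, and fixes every operator in that span. For each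
`K`, `multiTwirl d E K` is of this kind: its projections are the tensor products over the edges of
`P^±` (on `K`) and of `Φ`, `I - Φ` (off `K`). In particular the `P_T` are the family for `K = ∅`.
Partial transposition fixes `I` and sends `V` to `d Φ`, and `T'` and `T` are the orthogonal
projections onto `span {I, V}` and `span {I, d Φ}`, two bases with the same Gram matrix. Hence
`Q̃^{Γ_K}` is the twirl of `Q^{Γ_K}` for `K = ∅`, which fixes `W` and therefore preserves
`Q^{Γ_K} ⪯ W`.
-/

section PiKronecker

variable {ι R : Type*} [Fintype ι] [CommSemiring R]

/-- The tensor product `⊗ i, A i` of a finite family of matrices, with rows and columns indexed by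
tuples. It is the `ι`-ary version of `Matrix.kronecker`. -/
def piKronecker {m n : ι → Type*} (A : ∀ i, Matrix (m i) (n i) R) :
    Matrix (∀ i, m i) (∀ i, n i) R :=
  Matrix.of fun x y => ∏ i, A i (x i) (y i)

lemma piKronecker_apply {m n : ι → Type*} (A : ∀ i, Matrix (m i) (n i) R) (x : ∀ i, m i)
    (y : ∀ i, n i) : piKronecker A x y = ∏ i, A i (x i) (y i) :=
  rfl

lemma piKronecker_mul [DecidableEq ι] {l m n : ι → Type*} [∀ i, Fintype (m i)]
    (A : ∀ i, Matrix (l i) (m i) R) (B : ∀ i, Matrix (m i) (n i) R) :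
    piKronecker A * piKronecker B = piKronecker fun i => A i * B i := by
  ext x y
  simp only [piKronecker_apply, Matrix.mul_apply, ← Finset.prod_mul_distrib,
    Finset.prod_univ_sum, Fintype.piFinset_univ]

lemma trace_piKronecker [DecidableEq ι] {n : ι → Type*} [∀ i, Fintype (n i)]
    (A : ∀ i, Matrix (n i) (n i) R) : (piKronecker A).trace = ∏ i, (A i).trace := by
  simp only [Matrix.trace, Matrix.diag_apply, piKronecker_apply, Finset.prod_univ_sum,
    Fintype.piFinset_univ]

lemma piKronecker_one {n : ι → Type*} [∀ i, DecidableEq (n i)] :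
    piKronecker (1 : ∀ i, Matrix (n i) (n i) R) = 1 := by
  ext x y
  simp [piKronecker_apply, Matrix.one_apply, Finset.prod_ite_zero, funext_iff]

lemma piKronecker_eq_zero {m n : ι → Type*} {A : ∀ i, Matrix (m i) (n i) R} {i : ι}
    (hi : A i = 0) : piKronecker A = 0 := by
  ext x y
  exact Finset.prod_eq_zero (Finset.mem_univ i) (by simp [hi])

lemma conjTranspose_piKronecker [StarRing R] {m n : ι → Type*}
    (A : ∀ i, Matrix (m i) (n i) R) : (piKronecker A)ᴴ = piKronecker fun i => (A i)ᴴ := by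
  ext x y
  simp [piKronecker_apply, Matrix.conjTranspose_apply]

lemma prod_add_eq_sum_prod_piecewise [DecidableEq ι] (f g : ι → R) :
    ∏ i, (f i + g i) = ∑ T : Finset ι, ∏ i, T.piecewise f g i := by
  simpa using (MultilinearMap.mkPiAlgebra R ι R).map_add_univ f g

lemma piKronecker_add [DecidableEq ι] {m n : ι → Type*} (A B : ∀ i, Matrix (m i) (n i) R) :
    piKronecker (A + B) = ∑ T : Finset ι, piKronecker (T.piecewise A B) := by
  ext x y
  simp only [Matrix.sum_apply, piKronecker_apply, Pi.add_apply, Matrix.add_apply,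
    prod_add_eq_sum_prod_piecewise]
  refine Finset.sum_congr rfl fun T _ => Finset.prod_congr rfl fun i _ => ?_
  by_cases hi : i ∈ T <;> simp [hi]

end PiKronecker

section SectorProj

lemma piecewise_one_sub_mul_eq_zero {ι : Type*} [DecidableEq ι] {A : ι → Type*} [∀ i, Ring (A i)]
    {p : ∀ i, A i} {i : ι} (hp : IsIdempotentElem (p i)) {S T : Finset ι}
    (hi : ¬(i ∈ S ↔ i ∈ T)) : S.piecewise p (1 - p) i * T.piecewise p (1 - p) i = 0 := by
  by_cases hS : i ∈ S <;> by_cases hT : i ∈ T <;>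
    simp_all [hp.mul_one_sub_self, hp.one_sub_mul_self]

variable {ι R : Type*} [Fintype ι] [DecidableEq ι] [CommRing R] {n : ι → Type*}
  [∀ i, Fintype (n i)] [∀ i, DecidableEq (n i)]

/-- For projections `F i`, the projection `⊗_{i ∈ T} F i ⊗ ⊗_{i ∉ T} (1 - F i)` onto the sector
labelled by `T`. -/
def sectorProj (F : ∀ i, Matrix (n i) (n i) R) (T : Finset ι) :
    Matrix (∀ i, n i) (∀ i, n i) R :=
  piKronecker (T.piecewise F (1 - F))

variable {F : ∀ i, Matrix (n i) (n i) R}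

lemma completeOrthogonalIdempotents_sectorProj (hF : ∀ i, IsIdempotentElem (F i)) :
    CompleteOrthogonalIdempotents (sectorProj F) := by
  refine CompleteOrthogonalIdempotents.iff_ortho_complete.mpr ⟨fun S T hST => ?_, ?_⟩
  · obtain ⟨i, hi⟩ : ∃ i, ¬(i ∈ S ↔ i ∈ T) := by simpa [Finset.ext_iff] using hST
    rw [sectorProj, sectorProj, piKronecker_mul]
    exact piKronecker_eq_zero (piecewise_one_sub_mul_eq_zero (hF i) hi)
  · simp only [sectorProj, ← piKronecker_add, add_sub_cancel, piKronecker_one]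

lemma isStarProjection_sectorProj [StarRing R] (hF : ∀ i, IsStarProjection (F i))
    (T : Finset ι) : IsStarProjection (sectorProj F T) where
  isIdempotentElem :=
    (completeOrthogonalIdempotents_sectorProj fun i => (hF i).isIdempotentElem).idem T
  isSelfAdjoint := by
    rw [IsSelfAdjoint, Matrix.star_eq_conjTranspose, sectorProj, conjTranspose_piKronecker]
    congr 1
    funext i
    exact T.piecewise_cases F (1 - F) (fun A => Aᴴ = A) (hF i).isSelfAdjoint
      (hF i).one_sub.isSelfAdjoint

end SectorProj

section Twirl

variable {ι n : Type*} [Fintype ι] [Fintype n]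

/-- The twirl `M ↦ ∑ i, (Tr (P i M) / Tr (P i)) P i` along a family of projections `P i`. A
projection of trace zero vanishes, so the convention `x / 0 = 0` does no harm. -/
def twirl {𝕜 : Type*} [Field 𝕜] (P : ι → Matrix n n 𝕜) : Matrix n n 𝕜 →ₗ[𝕜] Matrix n n 𝕜 where
  toFun M := ∑ i, ((P i * M).trace / (P i).trace) • P i
  map_add' M N := by
    simp only [mul_add, Matrix.trace_add, add_div, add_smul, Finset.sum_add_distrib]
  map_smul' c M := by
    simp only [Matrix.mul_smul, Matrix.trace_smul, smul_eq_mul, mul_div_assoc, mul_smul,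
      Finset.smul_sum, RingHom.id_apply]

lemma twirl_apply {𝕜 : Type*} [Field 𝕜] (P : ι → Matrix n n 𝕜) (M : Matrix n n 𝕜) :
    twirl P M = ∑ i, ((P i * M).trace / (P i).trace) • P i :=
  rfl

section CharZero

variable {𝕜 : Type*} [Field 𝕜] [CharZero 𝕜]

lemma eq_zero_of_isIdempotentElem_of_trace_eq_zero {A : Matrix n n 𝕜} (hA : IsIdempotentElem A)
    (htr : A.trace = 0) : A = 0 := by
  classical
  have hlin : IsIdempotentElem (Matrix.toLin' A) := hA.map (Matrix.toLinAlgEquiv' (R := 𝕜))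
  rw [← Matrix.trace_toLin'_eq] at htr
  exact (map_eq_zero_iff _ (Matrix.toLin' (R := 𝕜)).injective).mp
    (LinearMap.IsIdempotentElem.eq_zero_of_trace_eq_zero hlin htr)

variable [DecidableEq n] {P : ι → Matrix n n 𝕜}

lemma twirl_sum_smul (hP : OrthogonalIdempotents P) (c : ι → 𝕜) :
    twirl P (∑ i, c i • P i) = ∑ i, c i • P i := by
  classical
  rw [twirl_apply]
  refine Finset.sum_congr rfl fun i _ => ?_
  have hcoeff : (P i * ∑ j, c j • P j).trace = c i * (P i).trace := by
    simp [Finset.mul_sum, hP.mul_eq]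
  rw [hcoeff]
  by_cases htr : (P i).trace = 0
  · simp [eq_zero_of_isIdempotentElem_of_trace_eq_zero (hP.idem i) htr]
  · rw [mul_div_cancel_right₀ _ htr]

lemma twirl_one (hP : CompleteOrthogonalIdempotents P) : twirl P 1 = 1 := by
  simpa [hP.complete] using twirl_sum_smul hP.toOrthogonalIdempotents 1

end CharZero

section StarProjection

lemma isSelfAdjoint_trace_mul {R : Type*} [CommSemiring R] [StarRing R] {A B : Matrix n n R}
    (hA : A.IsHermitian) (hB : B.IsHermitian) : IsSelfAdjoint (A * B).trace := by
  rw [IsSelfAdjoint, ← Matrix.trace_conjTranspose, Matrix.conjTranspose_mul, hA.eq, hB.eq,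
    Matrix.trace_mul_comm]

variable {R : Type*} [CommRing R] [PartialOrder R] [StarRing R] [StarOrderedRing R]
  {A : Matrix n n R}

lemma posSemidef_of_isStarProjection (hA : IsStarProjection A) : A.PosSemidef := by
  have hfactor : Aᴴ * A = A := by
    rw [← Matrix.star_eq_conjTranspose, hA.isSelfAdjoint.star_eq, hA.isIdempotentElem.eq]
  exact hfactor ▸ Matrix.posSemidef_conjTranspose_mul_self A

lemma trace_mul_nonneg_of_isStarProjection (hA : IsStarProjection A) {M : Matrix n n R}
    (hM : M.PosSemidef) : 0 ≤ (A * M).trace := by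
  have hcompress : (A * M).trace = (A * M * Aᴴ).trace := by
    rw [← Matrix.star_eq_conjTranspose, hA.isSelfAdjoint.star_eq, Matrix.trace_mul_comm (A * M),
      ← mul_assoc, hA.isIdempotentElem.eq]
  exact hcompress ▸ (hM.mul_mul_conjTranspose_same A).trace_nonneg

end StarProjection

section RCLike

variable {𝕜 : Type*} [RCLike 𝕜] {P : ι → Matrix n n 𝕜} {M : Matrix n n 𝕜}

lemma posSemidef_twirl (hP : ∀ i, IsStarProjection (P i)) (hM : M.PosSemidef) :
    (twirl P M).PosSemidef :=
  Matrix.posSemidef_sum _ fun i _ =>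
    (posSemidef_of_isStarProjection (hP i)).smul <|
      div_nonneg (trace_mul_nonneg_of_isStarProjection (hP i) hM)
        (posSemidef_of_isStarProjection (hP i)).trace_nonneg

lemma exists_real_twirl_eq_sum_smul (hP : ∀ i, (P i).IsHermitian) (hM : M.IsHermitian) :
    ∃ q : ι → ℝ, twirl P M = ∑ i, (q i : 𝕜) • P i := by
  classical
  refine ⟨fun i => RCLike.re ((P i * M).trace / (P i).trace), ?_⟩
  refine (twirl_apply P M).trans (Finset.sum_congr rfl fun i _ => ?_)
  have hnum := isSelfAdjoint_trace_mul (hP i) hM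
  have hden : IsSelfAdjoint (P i).trace := by
    simpa using isSelfAdjoint_trace_mul (hP i) Matrix.isHermitian_one
  rw [RCLike.conj_eq_iff_re.mp (hnum.div hden).star_eq]

end RCLike

end Twirl

section TwirlKernel

variable {𝕜 : Type*} [Field 𝕜]

/-- The matrix elements of the twirl along the pair of projections `A`, `1 - A`: it sends `M` to
the matrix with entries `∑ a b, twirlKernel A p q a b * M b a`. -/
def twirlKernel {n : Type*} [Fintype n] [DecidableEq n] (A : Matrix n n 𝕜) (p q a b : n) : 𝕜 :=
  A p q * A a b / A.trace + (1 - A) p q * (1 - A) a b / (1 - A).trace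

variable {ι : Type*} [Fintype ι] [DecidableEq ι] {n : ι → Type*} [∀ i, Fintype (n i)]
  [∀ i, DecidableEq (n i)] (F : ∀ i, Matrix (n i) (n i) 𝕜)

lemma prod_twirlKernel (x y a b : ∀ i, n i) :
    ∏ i, twirlKernel (F i) (x i) (y i) (a i) (b i) =
      ∑ T, sectorProj F T x y * sectorProj F T a b / (sectorProj F T).trace := by
  simp only [twirlKernel, prod_add_eq_sum_prod_piecewise, sectorProj, trace_piKronecker,
    piKronecker_apply, ← Finset.prod_mul_distrib, ← Finset.prod_div_distrib]
  refine Finset.sum_congr rfl fun T _ => Finset.prod_congr rfl fun i _ => ?_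
  by_cases hi : i ∈ T <;> simp [hi]

lemma twirl_sectorProj_apply (M : Matrix (∀ i, n i) (∀ i, n i) 𝕜) (x y : ∀ i, n i) :
    twirl (sectorProj F) M x y =
      ∑ a, ∑ b, (∏ i, twirlKernel (F i) (x i) (y i) (a i) (b i)) * M b a := by
  calc twirl (sectorProj F) M x y
      = ∑ T, ∑ a, ∑ b,
          sectorProj F T x y * sectorProj F T a b / (sectorProj F T).trace * M b a := by
        simp only [twirl_apply, Matrix.sum_apply, Matrix.smul_apply, smul_eq_mul, Matrix.trace,
          Matrix.diag_apply, Matrix.mul_apply, Finset.sum_div, Finset.sum_mul]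
        refine Finset.sum_congr rfl fun T _ => Finset.sum_congr rfl fun a _ =>
          Finset.sum_congr rfl fun b _ => ?_
        ring
    _ = ∑ a, ∑ b, (∏ i, twirlKernel (F i) (x i) (y i) (a i) (b i)) * M b a := by
        simp only [prod_twirlKernel, Finset.sum_mul]
        rw [Finset.sum_comm]
        exact Finset.sum_congr rfl fun a _ => Finset.sum_comm

end TwirlKernel

section EdgeProjections

variable {d : ℕ}

lemma isStarProjection_phiM (hd : d ≠ 0) : IsStarProjection (phiM d) where
  isIdempotentElem := by
    have hd' : (d : ℂ) ≠ 0 := Nat.cast_ne_zero.mpr hd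
    ext p q
    by_cases hp : p.1 = p.2 <;> by_cases hq : q.1 = q.2 <;>
      simp [phiM, Matrix.mul_apply, Fintype.sum_prod_type, hp, hq, hd']
  isSelfAdjoint := by
    ext p q
    simp [phiM, Matrix.star_apply, apply_ite (star : ℂ → ℂ), and_comm]

lemma trace_phiM (hd : d ≠ 0) : (phiM d).trace = 1 := by
  simp [phiM, Matrix.trace, Fintype.sum_prod_type, hd]

lemma trace_one_sub_phiM (hd : d ≠ 0) : (1 - phiM d).trace = (d : ℂ) ^ 2 - 1 := by
  simp [Matrix.trace_sub, trace_phiM hd, sq]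

lemma isSelfAdjoint_swapM : IsSelfAdjoint (swapM d) := by
  ext p q
  simp [swapM, Matrix.star_apply, apply_ite, and_comm, eq_comm]

lemma swapM_mul_self : swapM d * swapM d = 1 := by
  ext ⟨p₁, p₂⟩ ⟨q₁, q₂⟩
  simp [swapM, Matrix.mul_apply, Matrix.one_apply, Fintype.sum_prod_type, ite_and]

lemma trace_swapM : (swapM d).trace = d := by
  simp [swapM, Matrix.trace, Fintype.sum_prod_type, ite_and]

lemma isStarProjection_Pplus : IsStarProjection (Pplus d) where
  isIdempotentElem := by
    simp only [IsIdempotentElem, Pplus, Matrix.smul_mul, Matrix.mul_smul, add_mul, mul_add,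
      swapM_mul_self, one_mul, mul_one]
    module
  isSelfAdjoint := by
    simp [IsSelfAdjoint, Pplus, isSelfAdjoint_swapM.star_eq]

lemma one_sub_Pplus : 1 - Pplus d = Pminus d := by
  rw [Pplus, Pminus]
  module

lemma trace_Pplus : (Pplus d).trace = d * (d + 1) / 2 := by
  simp only [Pplus, Matrix.trace_smul, Matrix.trace_add, Matrix.trace_one, trace_swapM,
    Fintype.card_prod, Fintype.card_fin, Nat.cast_mul, smul_eq_mul]
  ring

lemma trace_Pminus : (Pminus d).trace = d * (d - 1) / 2 := by
  simp only [Pminus, Matrix.trace_smul, Matrix.trace_sub, Matrix.trace_one, trace_swapM,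
    Fintype.card_prod, Fintype.card_fin, Nat.cast_mul, smul_eq_mul]
  ring

lemma twirlKernel_phiM (hd : d ≠ 0) : twirlKernel (phiM d) = kerT d := by
  funext p q a b
  rw [twirlKernel, kerT, trace_phiM hd, trace_one_sub_phiM hd, div_one]

lemma twirlKernel_Pplus : twirlKernel (Pplus d) = kerT' d := by
  funext p q a b
  rw [twirlKernel, kerT', one_sub_Pplus, trace_Pplus, trace_Pminus]
  simp only [div_div_eq_mul_div]
  ring

end EdgeProjections

section MultiTwirl

variable {d : ℕ} {E : Type*} [DecidableEq E]

variable (d) in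
/-- The projections along which `multiTwirl d E K` twirls the individual edges: `P⁺` on `K` and `Φ`
off `K`, each paired with its complement. -/
noncomputable def edgeProj (K : Finset E) : E → Matrix (Fin d × Fin d) (Fin d × Fin d) ℂ :=
  K.piecewise (fun _ => Pplus d) fun _ => phiM d

lemma isStarProjection_edgeProj (hd : d ≠ 0) (K : Finset E) (e : E) :
    IsStarProjection (edgeProj d K e) :=
  K.piecewise_cases (fun _ => Pplus d) (fun _ => phiM d) IsStarProjection isStarProjection_Pplus
    (isStarProjection_phiM hd)

lemma twirlKernel_edgeProj (hd : d ≠ 0) (K : Finset E) (e : E) :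
    twirlKernel (edgeProj d K e) = if e ∈ K then kerT' d else kerT d := by
  by_cases he : e ∈ K <;> simp [edgeProj, he, twirlKernel_Pplus, twirlKernel_phiM hd]

variable [Fintype E]

lemma multiTwirl_eq_twirl (hd : d ≠ 0) (K : Finset E)
    (M : Matrix (E → Fin d × Fin d) (E → Fin d × Fin d) ℂ) :
    multiTwirl d E K M = twirl (sectorProj (edgeProj d K)) M := by
  ext x y
  simp only [multiTwirl, Matrix.of_apply, twirl_sectorProj_apply, twirlKernel_edgeProj hd,
    ite_apply]

lemma PT_eq_sectorProj (T : Finset E) : PT d E T = sectorProj (edgeProj d ∅) T := by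
  ext x y
  refine Finset.prod_congr rfl fun e _ => ?_
  by_cases he : e ∈ T <;> simp [edgeProj, he]

end MultiTwirl

section PartialTranspose

variable {d : ℕ}

/-- For a Hermitian `V` with `Tr V = d` and `Tr V² = d²`, the matrix elements of the
Hilbert–Schmidt orthogonal projection onto `span {I, V}`, obtained by inverting the Gram matrix
`[[d², d], [d, d²]]`. -/
noncomputable def spanKernel (V : Matrix (Fin d × Fin d) (Fin d × Fin d) ℂ)
    (p q a b : Fin d × Fin d) : ℂ :=
  ((1 : Matrix _ _ ℂ) p q * (1 : Matrix _ _ ℂ) a b + V p q * V a b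
    - ((1 : Matrix _ _ ℂ) p q * V a b + V p q * (1 : Matrix _ _ ℂ) a b) / d) / ((d : ℂ) ^ 2 - 1)

lemma natCast_sq_sub_one_ne_zero {R : Type*} [Ring R] [CharZero R] (hd : 2 ≤ d) :
    (d : R) ^ 2 - 1 ≠ 0 := by
  rw [sub_ne_zero]
  exact_mod_cast (Nat.one_lt_pow two_ne_zero hd).ne'

lemma kerT_eq_spanKernel (hd : 2 ≤ d) : kerT d = spanKernel ((d : ℂ) • phiM d) := by
  have hd₀ : (d : ℂ) ≠ 0 := Nat.cast_ne_zero.mpr (by lia)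
  have hd₁ : (d : ℂ) ^ 2 - 1 ≠ 0 := natCast_sq_sub_one_ne_zero hd
  funext p q a b
  simp only [kerT, spanKernel, Matrix.sub_apply, Matrix.smul_apply, smul_eq_mul]
  field_simp
  ring

lemma kerT'_eq_spanKernel (hd : 2 ≤ d) : kerT' d = spanKernel (swapM d) := by
  have hd₀ : (d : ℂ) ≠ 0 := Nat.cast_ne_zero.mpr (by lia)
  have hfactor : (d : ℂ) ^ 2 - 1 = (d - 1) * (d + 1) := by ring
  obtain ⟨hpred, hsucc⟩ := mul_ne_zero_iff.mp (hfactor ▸ natCast_sq_sub_one_ne_zero hd)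
  funext p q a b
  simp only [kerT', spanKernel, Pplus, Pminus, Matrix.smul_apply, Matrix.add_apply,
    Matrix.sub_apply, smul_eq_mul, hfactor]
  field_simp
  ring

lemma one_partialTranspose_apply {m n R : Type*} [DecidableEq m] [DecidableEq n] [Zero R] [One R]
    (p q : m × n) :
    (1 : Matrix (m × n) (m × n) R) (q.1, p.2) (p.1, q.2) = (1 : Matrix (m × n) (m × n) R) p q := by
  simp [Matrix.one_apply, Prod.ext_iff, eq_comm]

lemma swapM_partialTranspose_apply (hd : d ≠ 0) (p q : Fin d × Fin d) :
    swapM d (q.1, p.2) (p.1, q.2) = ((d : ℂ) • phiM d) p q := by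
  simp [swapM, phiM, hd, eq_comm, and_comm]

lemma kerT'_partialTranspose (hd : 2 ≤ d) (p q a b : Fin d × Fin d) :
    kerT' d (q.1, p.2) (p.1, q.2) (b.1, a.2) (a.1, b.2) = kerT d p q a b := by
  simp only [kerT_eq_spanKernel hd, kerT'_eq_spanKernel hd, spanKernel, one_partialTranspose_apply,
    swapM_partialTranspose_apply (by lia : d ≠ 0)]

variable {E : Type*} [DecidableEq E]

/-- The permutation of pairs (row, column) of indices underlying the partial transpose of the first
factor of every edge in `K`. -/
def partialTransposeIndex {m n : Type*} (K : Finset E) :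
    Equiv.Perm ((E → m × n) × (E → m × n)) :=
  Function.Involutive.toPerm
    (fun z => (fun e => if e ∈ K then ((z.2 e).1, (z.1 e).2) else z.1 e,
      fun e => if e ∈ K then ((z.1 e).1, (z.2 e).2) else z.2 e))
    fun z => by ext e <;> by_cases he : e ∈ K <;> simp [he]

lemma partialTransposeIndex_fst_apply {m n : Type*} (K : Finset E)
    (z : (E → m × n) × (E → m × n)) (e : E) :
    (partialTransposeIndex K z).1 e = if e ∈ K then ((z.2 e).1, (z.1 e).2) else z.1 e :=
  rfl

lemma partialTransposeIndex_snd_apply {m n : Type*} (K : Finset E)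
    (z : (E → m × n) × (E → m × n)) (e : E) :
    (partialTransposeIndex K z).2 e = if e ∈ K then ((z.1 e).1, (z.2 e).2) else z.2 e :=
  rfl

lemma ptK_apply (K : Finset E) (M : Matrix (E → Fin d × Fin d) (E → Fin d × Fin d) ℂ)
    (x y : E → Fin d × Fin d) :
    ptK d E K M x y =
      M (partialTransposeIndex K (x, y)).1 (partialTransposeIndex K (x, y)).2 :=
  rfl

lemma isHermitian_ptK (K : Finset E) {M : Matrix (E → Fin d × Fin d) (E → Fin d × Fin d) ℂ}
    (hM : M.IsHermitian) : (ptK d E K M).IsHermitian :=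
  Matrix.IsHermitian.ext fun _ _ => hM.apply _ _

variable [Fintype E]

lemma ptK_multiTwirl (hd : 2 ≤ d) (K : Finset E)
    (M : Matrix (E → Fin d × Fin d) (E → Fin d × Fin d) ℂ) :
    ptK d E K (multiTwirl d E K M) = multiTwirl d E ∅ (ptK d E K M) := by
  ext x y
  simp only [ptK_apply, multiTwirl, Matrix.of_apply, Finset.notMem_empty, if_false]
  rw [← Fintype.sum_prod_type', ← Fintype.sum_prod_type',
    ← Equiv.sum_comp (partialTransposeIndex K)]
  refine Finset.sum_congr rfl fun z _ => congrArg₂ _ (Finset.prod_congr rfl fun e _ => ?_) ?_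
  · by_cases he : e ∈ K
    · simpa only [partialTransposeIndex_fst_apply, partialTransposeIndex_snd_apply, he, if_true]
        using kerT'_partialTranspose hd (x e) (y e) (z.1 e) (z.2 e)
    · simp only [partialTransposeIndex_fst_apply, partialTransposeIndex_snd_apply, he, if_false]
  · rfl

end PartialTranspose

/-- Twirling of a witness certificate: if `W = Σ_T w_T P_T`, `Q ⪰ 0` and
`Q^{Γ_K} ⪯ W`, then `Q̃ = (⊗_{e∉K} T_e ⊗ ⊗_{e∈K} T'_e)(Q)` satisfies `Q̃ ⪰ 0`,
`Q̃^{Γ_K} ⪯ W`, `Q̃^{Γ_K} = Σ_T q_T P_T` for some real `q_T`; and `Q ⪯ I → Q̃ ⪯ I`. -/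
theorem stmt_6 (d : ℕ) (hd : 2 ≤ d) (E : Type*) [Fintype E] [DecidableEq E] [Nonempty E]
    (w : Finset E → ℝ) (K : Finset E)
    (Q : Matrix (E → Fin d × Fin d) (E → Fin d × Fin d) ℂ)
    (hQ : Q.PosSemidef)
    (hQW : ((∑ T : Finset E, (w T : ℂ) • PT d E T) - ptK d E K Q).PosSemidef) :
    (multiTwirl d E K Q).PosSemidef ∧
    ((∑ T : Finset E, (w T : ℂ) • PT d E T) - ptK d E K (multiTwirl d E K Q)).PosSemidef ∧
    (∃ q : Finset E → ℝ,
      ptK d E K (multiTwirl d E K Q) = ∑ T : Finset E, (q T : ℂ) • PT d E T) ∧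
    ((1 - Q).PosSemidef → (1 - multiTwirl d E K Q).PosSemidef) := by
  have hd₀ : d ≠ 0 := by lia
  have hproj (L : Finset E) := isStarProjection_sectorProj (isStarProjection_edgeProj hd₀ L)
  have hcomplete (L : Finset E) := completeOrthogonalIdempotents_sectorProj fun e =>
    (isStarProjection_edgeProj hd₀ L e).isIdempotentElem
  have hHerm : (ptK d E K Q).IsHermitian := isHermitian_ptK K hQ.isHermitian
  rw [ptK_multiTwirl hd]
  simp only [multiTwirl_eq_twirl hd₀, PT_eq_sectorProj] at hQW ⊢
  refine ⟨posSemidef_twirl (hproj K) hQ, ?_, ?_, fun hQ₁ => ?_⟩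
  · rw [← twirl_sum_smul (hcomplete ∅).toOrthogonalIdempotents, ← map_sub]
    exact posSemidef_twirl (hproj ∅) hQW
  · exact exists_real_twirl_eq_sum_smul (fun T => (hproj ∅ T).isSelfAdjoint) hHerm
  · rw [← twirl_one (hcomplete K), ← map_sub]
    exact posSemidef_twirl (hproj K) hQ₁
end

section
/- The E-SSW is fully decomposable: define W_E = −d · ⊗_{e∈E} Φ_e + ((d+1)^{1−|E|}/2) · ⊗_{e∈E} (I_e + d·Φ_e) on the total space. Then for every nonempty subset T ⊆ E there exists a matrix Q with 0 ⪯ Q ⪯ I and Q^{Γ_T} ⪯ W_E. -/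
open Matrix Finset
open scoped ComplexOrder

/-- The `E`-SSW: `W_E = −d·⊗_{e∈E} Φ_e + ((d+1)^{1−|E|}/2)·⊗_{e∈E}(I_e + d·Φ_e)`. -/
noncomputable def WE (d : ℕ) (E : Type*) [Fintype E] [DecidableEq E] :
    Matrix (E → Fin d × Fin d) (E → Fin d × Fin d) ℂ :=
  (-(d : ℂ)) • Matrix.of (fun x y => ∏ e, phiM d (x e) (y e))
    + ((((d : ℂ) + 1) ^ ((1 : ℤ) - (Fintype.card E : ℤ)) / 2)) •
      Matrix.of (fun x y => ∏ e, ((1 : Matrix (Fin d × Fin d) (Fin d × Fin d) ℂ)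
        + (d : ℂ) • phiM d) (x e) (y e))

/-! Pick `a ∈ T` and take for `Q` the tensor product of the antisymmetric projector `(I - F) / 2` on
the edge `a`, of `S = (I + F) / (d + 1)` on the other edges of `T`, and of `B = (I + d Φ) / (d + 1)`
off `T`, where `F` is the swap. All factors lie between `0` and `I`, hence so does `Q`. Partial
transposition exchanges `F` and `d Φ`, so it turns `S` into `B` and `(I - F) / 2` into
`(d + 1) / 2 • B - d • Φ`. Since `W_E = (d + 1) / 2 • B^{⊗E} - d • Φ^{⊗E}`, what is left of
`W_E - Q^{Γ_T}` is `d • (Φ_a ⊗ B^{⊗(E \ a)} - Φ^{⊗E})`, which is nonnegative because `Φ ⪯ B`. -/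

open scoped MatrixOrder

namespace SSW

section PiKronecker

variable {ι R : Type*} [Fintype ι] [CommSemiring R] {l m n : ι → Type*}

/-- The Kronecker (tensor) product of a finite family of matrices, as a multilinear map. Its rows
and columns are indexed by the dependent functions choosing an index in each factor. -/
def piKronecker :
    MultilinearMap R (fun i => Matrix (m i) (n i) R) (Matrix (∀ i, m i) (∀ i, n i) R) :=
  (ofLinearEquiv R).toLinearMap.compMultilinearMap <|
    MultilinearMap.pi fun x => MultilinearMap.pi fun y =>
      (MultilinearMap.mkPiAlgebra R ι R).compLinearMap fun i => entryLinearMap R R (x i) (y i)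

theorem piKronecker_apply (M : ∀ i, Matrix (m i) (n i) R) (x : ∀ i, m i) (y : ∀ i, n i) :
    piKronecker M x y = ∏ i, M i (x i) (y i) :=
  rfl

theorem piKronecker_mul [DecidableEq ι] [∀ i, Fintype (m i)]
    (M : ∀ i, Matrix (l i) (m i) R) (N : ∀ i, Matrix (m i) (n i) R) :
    piKronecker (fun i => M i * N i) = piKronecker M * piKronecker N := by
  ext x y
  simp only [piKronecker_apply, mul_apply, ← prod_mul_distrib, Fintype.prod_sum]

theorem conjTranspose_piKronecker [StarRing R] (M : ∀ i, Matrix (m i) (n i) R) :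
    (piKronecker M)ᴴ = piKronecker fun i => (M i)ᴴ := by
  ext x y
  simp only [piKronecker_apply, conjTranspose_apply, star_prod]

theorem piKronecker_one [∀ i, DecidableEq (n i)] [DecidableEq (∀ i, n i)] :
    piKronecker (fun i => (1 : Matrix (n i) (n i) R)) = 1 := by
  ext x y
  simp [piKronecker_apply, one_apply, prod_ite_zero, funext_iff]

end PiKronecker

section Order

variable {ι 𝕜 : Type*} [Fintype ι] [RCLike 𝕜] {n : ι → Type*} [∀ i, Finite (n i)]
  {M A B : ∀ i, Matrix (n i) (n i) 𝕜}

open scoped Matrix.Norms.L2Operator in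
theorem piKronecker_nonneg (hM : ∀ i, 0 ≤ M i) : 0 ≤ piKronecker M := by
  classical
  have (i : ι) : Fintype (n i) := Fintype.ofFinite _
  choose C hC using fun i => CStarAlgebra.nonneg_iff_eq_star_mul_self.mp (hM i)
  have factorization : piKronecker M = star (piKronecker C) * piKronecker C := by
    rw [star_eq_conjTranspose, conjTranspose_piKronecker, ← piKronecker_mul]
    exact congrArg piKronecker (funext hC)
  exact factorization ▸ star_mul_self_nonneg _

theorem piKronecker_update_le_update [DecidableEq ι] (hM : ∀ i, 0 ≤ M i) (a : ι)
    {X Y : Matrix (n a) (n a) 𝕜} (hXY : X ≤ Y) :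
    piKronecker (Function.update M a X) ≤ piKronecker (Function.update M a Y) := by
  rw [← sub_nonneg, ← MultilinearMap.map_update_sub]
  refine piKronecker_nonneg fun i => ?_
  obtain rfl | hi := eq_or_ne i a
  · simpa using hXY
  · simpa [hi] using hM i

theorem piKronecker_mono (hA : ∀ i, 0 ≤ A i) (hAB : ∀ i, A i ≤ B i) :
    piKronecker A ≤ piKronecker B := by
  classical
  suffices replaced : ∀ s : Finset ι, piKronecker (s.piecewise A B) ≤ piKronecker B by
    simpa using replaced univ
  intro s
  induction s using Finset.induction_on with
  | empty => simp
  | insert a s ha ih =>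
    have nonneg : ∀ i, 0 ≤ s.piecewise A B i := fun i =>
      s.piecewise_cases A B (0 ≤ ·) (hA i) ((hA i).trans (hAB i))
    have restore : Function.update (s.piecewise A B) a (B a) = s.piecewise A B :=
      Function.update_eq_self_iff.mpr (s.piecewise_eq_of_notMem A B ha).symm
    calc piKronecker ((insert a s).piecewise A B)
        = piKronecker (Function.update (s.piecewise A B) a (A a)) := by rw [piecewise_insert]
      _ ≤ piKronecker (Function.update (s.piecewise A B) a (B a)) :=
          piKronecker_update_le_update nonneg a (hAB a)
      _ = piKronecker (s.piecewise A B) := by rw [restore]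
      _ ≤ piKronecker B := ih

theorem piKronecker_le_one [∀ i, DecidableEq (n i)] (hA : ∀ i, 0 ≤ A i) (hA' : ∀ i, A i ≤ 1) :
    piKronecker A ≤ 1 :=
  (piKronecker_mono hA hA').trans_eq piKronecker_one

end Order

section PartialTranspose

variable {m n R : Type*} [Semiring R]

/-- Transposition of the first tensor factor of a matrix on a two-fold tensor product. -/
def partialTranspose : Matrix (m × n) (m × n) R →ₗ[R] Matrix (m × n) (m × n) R where
  toFun M := of fun p q => M (q.1, p.2) (p.1, q.2)
  map_add' _ _ := rfl
  map_smul' _ _ := rfl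

theorem partialTranspose_apply (M : Matrix (m × n) (m × n) R) (p q : m × n) :
    partialTranspose M p q = M (q.1, p.2) (p.1, q.2) :=
  rfl

theorem partialTranspose_one [DecidableEq m] [DecidableEq n] :
    partialTranspose (1 : Matrix (m × n) (m × n) R) = 1 := by
  ext p q
  simp [partialTranspose_apply, one_apply, Prod.ext_iff, eq_comm]

theorem ptK_piKronecker (d : ℕ) {E : Type*} [Fintype E] [DecidableEq E] (T : Finset E)
    (M : E → Matrix (Fin d × Fin d) (Fin d × Fin d) ℂ) :
    ptK d E T (piKronecker M) = piKronecker (T.piecewise (fun e => partialTranspose (M e)) M) := by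
  ext x y
  refine prod_congr rfl fun e _ => ?_
  by_cases he : e ∈ T <;> simp [he, partialTranspose_apply]

end PartialTranspose

section Involution

variable {K A : Type*} [Field K] [StarRing K] [NeZero (2 : K)] [Ring A] [StarRing A] [Algebra K A]
  [StarModule K A]

theorem isStarProjection_half_one_sub {u : A} (hu : IsSelfAdjoint u) (hu' : u * u = 1) :
    IsStarProjection ((2⁻¹ : K) • (1 - u)) where
  isIdempotentElem := by
    have two_ne_zero : (2 : K) ≠ 0 := NeZero.ne 2
    simp only [IsIdempotentElem, smul_mul_smul_comm, mul_sub, sub_mul, hu', mul_one, one_mul]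
    match_scalars <;> field_simp <;> norm_num
  isSelfAdjoint := by
    simp [IsSelfAdjoint, star_smul, hu.star_eq]

end Involution

section Swap

variable (n R : Type*) [DecidableEq n]

/-- The swap operator `F` on a two-fold tensor power. -/
abbrev swapMatrix [Zero R] [One R] : Matrix (n × n) (n × n) R :=
  Equiv.Perm.permMatrix R (Equiv.prodComm n n)

theorem isSelfAdjoint_swapMatrix [NonAssocSemiring R] [StarRing R] :
    IsSelfAdjoint (swapMatrix n R) :=
  conjTranspose_permMatrix _

theorem swapMatrix_mul_self [Fintype n] [NonAssocSemiring R] :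
    swapMatrix n R * swapMatrix n R = 1 := by
  rw [← permMatrix_mul, ← permMatrix_one]
  rfl

/-- The projector onto the antisymmetric subspace of a two-fold tensor power. -/
def antisymmetricProjector [Field R] : Matrix (n × n) (n × n) R :=
  (2⁻¹ : R) • (1 - swapMatrix n R)

theorem isStarProjection_antisymmetricProjector [Fintype n] [Field R] [StarRing R]
    [NeZero (2 : R)] :
    IsStarProjection (antisymmetricProjector n R) :=
  isStarProjection_half_one_sub (isSelfAdjoint_swapMatrix n R) (swapMatrix_mul_self n R)

end Swap

section Edge

variable (d : ℕ)

theorem isStarProjection_phiM : IsStarProjection (phiM d) where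
  isIdempotentElem := by
    ext p q
    have hd : (d : ℂ) ≠ 0 := Nat.cast_ne_zero.mpr p.1.pos.ne'
    by_cases hp : p.1 = p.2 <;> by_cases hq : q.1 = q.2 <;>
      simp [phiM, mul_apply, Fintype.sum_prod_type, hp, hq, hd]
  isSelfAdjoint := by
    ext p q
    simp [phiM, star_apply, and_comm, apply_ite (star : ℂ → ℂ)]

theorem partialTranspose_swapMatrix :
    partialTranspose (swapMatrix (Fin d) ℂ) = (d : ℂ) • phiM d := by
  ext p q
  have hd : (d : ℂ) ≠ 0 := Nat.cast_ne_zero.mpr p.1.pos.ne'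
  simp [partialTranspose_apply, phiM, PEquiv.toMatrix_apply, hd, eq_comm]

/-- The normalised isotropic operator `B = (I + d Φ) / (d + 1)`, whose largest eigenvalue is `1`. -/
noncomputable def isotropicMatrix : Matrix (Fin d × Fin d) (Fin d × Fin d) ℂ :=
  ((d : ℂ) + 1)⁻¹ • (1 + (d : ℂ) • phiM d)

/-- The Werner operator `S = (I + F) / (d + 1)`, the partial transpose of `isotropicMatrix`. -/
noncomputable def wernerMatrix : Matrix (Fin d × Fin d) (Fin d × Fin d) ℂ :=
  ((d : ℂ) + 1)⁻¹ • (1 + swapMatrix (Fin d) ℂ)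

theorem one_add_smul_phiM : 1 + (d : ℂ) • phiM d = ((d : ℂ) + 1) • isotropicMatrix d := by
  rw [isotropicMatrix, smul_inv_smul₀ d.cast_add_one_ne_zero]

theorem partialTranspose_wernerMatrix : partialTranspose (wernerMatrix d) = isotropicMatrix d := by
  simp only [wernerMatrix, isotropicMatrix, map_smul, map_add, partialTranspose_one,
    partialTranspose_swapMatrix]

theorem partialTranspose_antisymmetricProjector :
    partialTranspose (antisymmetricProjector (Fin d) ℂ) =
      (((d : ℂ) + 1) / 2) • isotropicMatrix d - (d : ℂ) • phiM d := by
  rw [div_eq_inv_mul, mul_smul, ← one_add_smul_phiM, antisymmetricProjector, map_smul, map_sub,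
    partialTranspose_one, partialTranspose_swapMatrix]
  module

theorem phiM_le_isotropicMatrix : phiM d ≤ isotropicMatrix d := by
  have gap : isotropicMatrix d - phiM d = ((d : ℂ) + 1)⁻¹ • (1 - phiM d) := by
    have := d.cast_add_one_ne_zero (R := ℂ)
    rw [isotropicMatrix]
    match_scalars <;> field_simp
    ring
  rw [← sub_nonneg, gap]
  exact smul_nonneg (by positivity) (isStarProjection_phiM d).one_sub_nonneg

theorem isotropicMatrix_nonneg : 0 ≤ isotropicMatrix d :=
  (isStarProjection_phiM d).nonneg.trans (phiM_le_isotropicMatrix d)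

theorem isotropicMatrix_le_one : isotropicMatrix d ≤ 1 := by
  have gap : 1 - isotropicMatrix d = ((d : ℂ) / (d + 1)) • (1 - phiM d) := by
    have := d.cast_add_one_ne_zero (R := ℂ)
    rw [isotropicMatrix]
    match_scalars <;> field_simp
    ring
  rw [← sub_nonneg, gap]
  exact smul_nonneg (by positivity) (isStarProjection_phiM d).one_sub_nonneg

theorem wernerMatrix_eq_smul_one_sub_antisymmetricProjector :
    wernerMatrix d = ((2 : ℂ) / (d + 1)) • (1 - antisymmetricProjector (Fin d) ℂ) := by
  rw [wernerMatrix, antisymmetricProjector]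
  match_scalars <;> field_simp
  ring

theorem wernerMatrix_nonneg : 0 ≤ wernerMatrix d := by
  rw [wernerMatrix_eq_smul_one_sub_antisymmetricProjector]
  exact smul_nonneg (by positivity) (isStarProjection_antisymmetricProjector _ ℂ).one_sub_nonneg

variable {d} in
theorem wernerMatrix_le_one (hd : d ≠ 0) : wernerMatrix d ≤ 1 := by
  have coeff_le_one : (2 : ℂ) / (d + 1) ≤ 1 := by
    refine div_le_one_of_le₀ ?_ (by positivity)
    exact_mod_cast Nat.succ_le_succ (Nat.one_le_iff_ne_zero.mpr hd)
  have proj := (isStarProjection_antisymmetricProjector (Fin d) ℂ).one_sub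
  rw [wernerMatrix_eq_smul_one_sub_antisymmetricProjector]
  calc ((2 : ℂ) / (d + 1)) • (1 - antisymmetricProjector (Fin d) ℂ)
      ≤ (1 : ℂ) • (1 - antisymmetricProjector (Fin d) ℂ) :=
        smul_le_smul_of_nonneg_right coeff_le_one proj.nonneg
    _ ≤ 1 := by simpa using proj.le_one

end Edge

section Decomposition

variable (d : ℕ) {E : Type*} [DecidableEq E] (T : Finset E) (a : E)

/-- The tensor factors of the operator `Q` decomposing the witness across `T`, built from a
distinguished edge `a` of `T`. -/
noncomputable def decompositionFactor : E → Matrix (Fin d × Fin d) (Fin d × Fin d) ℂ :=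
  Function.update (T.piecewise (fun _ => wernerMatrix d) fun _ => isotropicMatrix d) a
    (antisymmetricProjector (Fin d) ℂ)

variable {d} in
theorem decompositionFactor_mem_Icc (hd : d ≠ 0) (e : E) :
    decompositionFactor d T a e ∈ Set.Icc 0 1 := by
  have proj := isStarProjection_antisymmetricProjector (Fin d) ℂ
  obtain rfl | hea := eq_or_ne e a
  · simpa [decompositionFactor] using ⟨proj.nonneg, proj.le_one⟩
  · rw [decompositionFactor, Function.update_of_ne hea]
    exact T.piecewise_cases (fun _ => wernerMatrix d) (fun _ => isotropicMatrix d)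
      (· ∈ Set.Icc 0 1)
      ⟨wernerMatrix_nonneg d, wernerMatrix_le_one hd⟩
      ⟨isotropicMatrix_nonneg d, isotropicMatrix_le_one d⟩

variable {T a} in
theorem piecewise_partialTranspose_decompositionFactor (ha : a ∈ T) :
    T.piecewise (fun e => partialTranspose (decompositionFactor d T a e))
        (decompositionFactor d T a) =
      Function.update (fun _ => isotropicMatrix d) a
        (partialTranspose (antisymmetricProjector (Fin d) ℂ)) := by
  funext e
  obtain rfl | hea := eq_or_ne e a
  · simp [decompositionFactor, ha]
  · by_cases he : e ∈ T <;> simp [decompositionFactor, hea, he, partialTranspose_wernerMatrix]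

variable [Fintype E]

variable {T a} in
theorem ptK_piKronecker_decompositionFactor (ha : a ∈ T) :
    ptK d E T (piKronecker (decompositionFactor d T a)) =
      (((d : ℂ) + 1) / 2) • piKronecker (fun _ => isotropicMatrix d) -
        (d : ℂ) • piKronecker (Function.update (fun _ => isotropicMatrix d) a (phiM d)) := by
  rw [ptK_piKronecker, piecewise_partialTranspose_decompositionFactor d ha,
    partialTranspose_antisymmetricProjector, MultilinearMap.map_update_sub,
    MultilinearMap.map_update_smul, MultilinearMap.map_update_smul, Function.update_eq_self]

theorem WE_eq_piKronecker :
    WE d E = (((d : ℂ) + 1) / 2) • piKronecker (fun _ => isotropicMatrix d) -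
      (d : ℂ) • piKronecker (fun _ => phiM d) := by
  have unfolded : WE d E = -(d : ℂ) • piKronecker (fun _ => phiM d) +
      (((d : ℂ) + 1) ^ ((1 : ℤ) - Fintype.card E) / 2) •
        piKronecker (fun _ => 1 + (d : ℂ) • phiM d) := rfl
  have coeff : ((d : ℂ) + 1) ^ ((1 : ℤ) - Fintype.card E) / 2 * ((d : ℂ) + 1) ^ Fintype.card E =
      ((d : ℂ) + 1) / 2 := by
    rw [zpow_sub₀ d.cast_add_one_ne_zero, zpow_one, zpow_natCast]
    have := d.cast_add_one_ne_zero (R := ℂ)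
    field_simp
  rw [unfolded, one_add_smul_phiM, MultilinearMap.map_smul_univ, prod_const, card_univ, smul_smul,
    coeff, neg_smul, neg_add_eq_sub]

theorem piKronecker_phiM_le_update :
    piKronecker (fun _ : E => phiM d) ≤
      piKronecker (Function.update (fun _ => isotropicMatrix d) a (phiM d)) := by
  refine piKronecker_mono (fun _ => (isStarProjection_phiM d).nonneg) fun e => ?_
  obtain rfl | hea := eq_or_ne e a
  · simp
  · simpa [hea] using phiM_le_isotropicMatrix d

variable {T a} in
theorem ptK_piKronecker_decompositionFactor_le_WE (ha : a ∈ T) :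
    ptK d E T (piKronecker (decompositionFactor d T a)) ≤ WE d E := by
  rw [ptK_piKronecker_decompositionFactor d ha, WE_eq_piKronecker]
  exact sub_le_sub_left
    (smul_le_smul_of_nonneg_left (piKronecker_phiM_le_update d a) (Nat.cast_nonneg d)) _

end Decomposition

end SSW

/-- The `E`-SSW is fully decomposable: for every nonempty `T ⊆ E` there is a
matrix `Q` with `0 ⪯ Q ⪯ I` and `Q^{Γ_T} ⪯ W_E`. -/
theorem stmt_10 (d : ℕ) (hd : 2 ≤ d) (E : Type*) [Fintype E] [DecidableEq E] [Nonempty E]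
    (T : Finset E) (hT : T.Nonempty) :
    ∃ Q : Matrix (E → Fin d × Fin d) (E → Fin d × Fin d) ℂ,
      Q.PosSemidef ∧ (1 - Q).PosSemidef ∧ (WE d E - ptK d E T Q).PosSemidef := by
  obtain ⟨a, ha⟩ := hT
  have factor_mem := SSW.decompositionFactor_mem_Icc T a (Nat.ne_zero_of_lt hd)
  have Q_nonneg := SSW.piKronecker_nonneg fun e => (factor_mem e).1
  have Q_le_one := SSW.piKronecker_le_one (fun e => (factor_mem e).1) fun e => (factor_mem e).2
  exact ⟨SSW.piKronecker (SSW.decompositionFactor d T a), nonneg_iff_posSemidef.mp Q_nonneg,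
    le_iff.mp Q_le_one, le_iff.mp (SSW.ptK_piKronecker_decompositionFactor_le_WE d ha)⟩
end

section
/- PPT-mixture decomposition of the isotropic network state: for every real γ and every nonempty finite edge set E, ⊗_{e∈E} (Φ_e + γ(I_e − Φ_e)) = ((2d − (d+1)(1+(d−1)γ)^{|E|})/(d−1)) · ⊗_{e∈E} Φ_e + Σ_{T ⊆ E, T ≠ ∅} γ^{|T|} · ρ_T ⊗ ⊗_{e∉T} Φ_e, where ρ_T = ⊗_{e∈T} (I_e − Φ_e) + (d+1)(d−1)^{|T|−1} · ⊗_{e∈T} Φ_e. -/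
open Matrix Finset
open scoped ComplexOrder

/-!
Adding a multiple `w T` of `⨂_{e ∈ E} Φ_e` to each nonempty term of the binomial expansion of
`⨂_{e ∈ E} (Φ_e + γ (I_e - Φ_e))` costs `∑ w T` in the coefficient of the empty term. For the
weights `w T = (d + 1) (d - 1) ^ (|T| - 1) γ ^ |T|` coming from `ρ_T`, the binomial theorem gives
`∑ w T = (d + 1) ((1 + (d - 1) γ) ^ |E| - 1) / (d - 1)`.
-/

section SubsetExpansion

variable {E : Type*} [Fintype E]

theorem sum_finset_eq_empty_add_sum_nonempty {M : Type*} [AddCommMonoid M] (f : Finset E → M) :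
    ∑ T, f T = f ∅ + ∑ T with T.Nonempty, f T := by
  classical
  simp only [nonempty_iff_ne_empty, filter_ne', add_sum_erase _ f (mem_univ ∅)]

theorem mul_sum_nonempty_pow_card_mul_pow_pred_card {R : Type*} [CommRing R] (c g : R) :
    c * ∑ T : Finset E with T.Nonempty, g ^ #T * c ^ (#T - 1) =
      (1 + c * g) ^ Fintype.card E - 1 := by
  have binomial : (1 + c * g) ^ Fintype.card E =
      1 + ∑ T : Finset E with T.Nonempty, (c * g) ^ #T := by
    simpa [add_comm, sum_finset_eq_empty_add_sum_nonempty] using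
      (Fintype.sum_pow_mul_eq_add_pow E (c * g) 1).symm
  rw [binomial, add_sub_cancel_left, mul_sum]
  refine sum_congr rfl fun T hT => ?_
  have hcard : #T ≠ 0 := (mem_filter.mp hT).2.card_ne_zero
  rw [mul_left_comm, mul_pow_sub_one hcard, mul_pow, mul_comm]

variable [DecidableEq E]

theorem prod_add_eq_one_sub_sum_mul_add_sum_nonempty {R : Type*} [CommRing R]
    (a b : E → R) (w : Finset E → R) :
    ∏ e, (a e + b e) =
      (1 - ∑ T with T.Nonempty, w T) * ∏ e, a e +
        ∑ T with T.Nonempty, (∏ e ∈ T, b e + w T * ∏ e ∈ T, a e) * ∏ e ∈ Tᶜ, a e := by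
  have expansion : ∏ e, (a e + b e) =
      ∏ e, a e + ∑ T with T.Nonempty, (∏ e ∈ T, b e) * ∏ e ∈ Tᶜ, a e := by
    simp only [add_comm (a _), Fintype.prod_add, sum_finset_eq_empty_add_sum_nonempty,
      prod_empty, compl_empty, one_mul]
  simp only [expansion, add_mul, mul_assoc, prod_mul_prod_compl, sum_add_distrib, ← sum_mul]
  ring

theorem prod_add_mul_eq_one_sub_mul_add_sum_nonempty {K : Type*} [Field K]
    (a b : E → K) (g k : K) {c : K} (hc : c ≠ 0) :
    ∏ e, (a e + g * b e) =
      (1 - k * (((1 + c * g) ^ Fintype.card E - 1) / c)) * ∏ e, a e +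
        ∑ T with T.Nonempty,
          g ^ #T * ((∏ e ∈ T, b e + k * c ^ (#T - 1) * ∏ e ∈ T, a e) * ∏ e ∈ Tᶜ, a e) := by
  have total_weight : ∑ T : Finset E with T.Nonempty, k * (g ^ #T * c ^ (#T - 1)) =
      k * (((1 + c * g) ^ Fintype.card E - 1) / c) := by
    rw [← mul_sum, ← mul_sum_nonempty_pow_card_mul_pow_pred_card, mul_div_cancel_left₀ _ hc]
  rw [prod_add_eq_one_sub_sum_mul_add_sum_nonempty a _ fun T => k * (g ^ #T * c ^ (#T - 1)),
    total_weight]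
  congr 1
  refine sum_congr rfl fun T _ => ?_
  rw [prod_mul_distrib, prod_const]
  ring

end SubsetExpansion

theorem stmt_14_general {K E : Type*} [Field K] [Fintype E] [DecidableEq E] {m n : E → Type*}
    (A B : ∀ e, Matrix (m e) (n e) K) (g : K) {δ : K} (hδ : δ ≠ 1) :
    Matrix.of (fun (x : ∀ e, m e) (y : ∀ e, n e) => ∏ e,
        (A e (x e) (y e) + g * B e (x e) (y e))) =
      ((2 * δ - (δ + 1) * (1 + (δ - 1) * g) ^ Fintype.card E) / (δ - 1)) •
          Matrix.of (fun (x : ∀ e, m e) (y : ∀ e, n e) => ∏ e, A e (x e) (y e)) +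
        ∑ T : Finset E with T.Nonempty, g ^ #T •
          Matrix.of (fun (x : ∀ e, m e) (y : ∀ e, n e) =>
            (∏ e ∈ T, B e (x e) (y e) + (δ + 1) * (δ - 1) ^ (#T - 1) * ∏ e ∈ T, A e (x e) (y e)) *
              ∏ e ∈ Tᶜ, A e (x e) (y e)) := by
  have sub_one_ne_zero : δ - 1 ≠ 0 := sub_ne_zero.mpr hδ
  have coefficient : (2 * δ - (δ + 1) * (1 + (δ - 1) * g) ^ Fintype.card E) / (δ - 1) =
      1 - (δ + 1) * (((1 + (δ - 1) * g) ^ Fintype.card E - 1) / (δ - 1)) := by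
    field_simp
    ring
  ext x y
  simp only [Matrix.add_apply, Matrix.smul_apply, Matrix.sum_apply, Matrix.of_apply, smul_eq_mul]
  rw [coefficient]
  exact prod_add_mul_eq_one_sub_mul_add_sum_nonempty _ _ g (δ + 1) sub_one_ne_zero

/-- PPT-mixture decomposition of the isotropic network state:
`⊗_{e∈E}(Φ_e + γ(I_e − Φ_e))
  = ((2d − (d+1)(1+(d−1)γ)^{|E|})/(d−1))·⊗_{e∈E} Φ_e
    + Σ_{∅ ≠ T ⊆ E} γ^{|T|}·(ρ_T ⊗ ⊗_{e∉T} Φ_e)`,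
with `ρ_T = ⊗_{e∈T}(I_e − Φ_e) + (d+1)(d−1)^{|T|−1}·⊗_{e∈T} Φ_e`. -/
theorem stmt_14 (d : ℕ) (hd : 2 ≤ d) (E : Type*) [Fintype E] [DecidableEq E] [Nonempty E]
    (γ : ℝ) :
    Matrix.of (fun x y : E → Fin d × Fin d => ∏ e,
        (phiM d (x e) (y e) + (γ : ℂ) *
          ((1 : Matrix (Fin d × Fin d) (Fin d × Fin d) ℂ) - phiM d) (x e) (y e)))
      = ((2 * (d : ℂ) - ((d : ℂ) + 1)
            * (1 + ((d : ℂ) - 1) * (γ : ℂ)) ^ Fintype.card E) / ((d : ℂ) - 1)) •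
          Matrix.of (fun x y : E → Fin d × Fin d => ∏ e, phiM d (x e) (y e))
        + ∑ T ∈ Finset.univ.filter (fun T : Finset E => T.Nonempty),
            (γ : ℂ) ^ T.card •
              Matrix.of (fun x y : E → Fin d × Fin d =>
                ((∏ e ∈ T, ((1 : Matrix (Fin d × Fin d) (Fin d × Fin d) ℂ) - phiM d)
                      (x e) (y e))
                  + ((d : ℂ) + 1) * ((d : ℂ) - 1) ^ (T.card - 1)
                      * ∏ e ∈ T, phiM d (x e) (y e))
                * ∏ e ∈ Tᶜ, phiM d (x e) (y e)) := by
  have d_ne_one : (d : ℂ) ≠ 1 := by exact_mod_cast (by omega : d ≠ 1)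
  exact stmt_14_general (fun _ => phiM d) (fun _ => 1 - phiM d) (γ : ℂ) d_ne_one
end
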